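/- For every real α > 0 with α not an integer and every C₁ > 0, there exists a constant C₂ > 0 depending only on α and C₁ (in particular independent of L) with the following property: for every real L ≥ 1 and every smooth function f : ℝ × ℝ → ℝ that is 2π-periodic in its second variable and satisfies |f(s,θ)| ≤ C₁ (e^s + e^{-s})^α for all s ∈ [-L,L] and all θ, there exists a twice continuously differentiable function v : ℝ × ℝ → ℝ, 2π-periodic in its second variable, such that ∂²v/∂s² + ∂²v/∂θ² = f(s,θ) for all (s,θ) ∈ [-L,L] × ℝ, and |v(s,θ)| ≤ C₂ (e^s + e^{-s})^α for all (s,θ) ∈ [-L,L] × ℝ. -/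

import Mathlib

/-!
Freezing `f` beyond `s = ±L` extends it to the infinite cylinder as a continuous function that is
still `C²` in `θ` and satisfies the same growth bound. The `n`-th Fourier mode of a solution
satisfies `u'' - n² u = g`, which factors as `(d/ds + n)(d/ds - n) u = g`. Each factor
`P' = c P + g`, `c = ±n`, is solved by integrating from `0` when `|c| < α` and from `±∞` when
`|c| > α`, at the cost of a factor `1 / ||c| - α|` in the weighted sup norm with weight
`exp (α |s|)`, which is comparable to `(exp s + exp (-s)) ^ α`. Hence the constant is, up to this
comparison, the convergent series `∑ 1 / (|n| - α)²`, which does not see `L`.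

For `|n| > α` the same integrals also preserve the smaller weight `min (A exp (α |s|)) M`, so the
decay `M = O(1 / n²)` of the Fourier coefficients passes to the modes and their derivatives, and
the Fourier series converges in `C²`.
-/

open Real Set Filter MeasureTheory

section ModeEquation

variable {E : Type*} [NormedAddCommGroup E] [NormedSpace ℝ E]

/-- A weight that changes by a factor of at most `exp α` over unit distance. Weights of this kind
survive convolution with kernels decaying faster than `exp (-α * |t|)`. -/
def HasGrowthRate (ω : ℝ → ℝ) (α : ℝ) : Prop :=
  ∀ s t, ω t ≤ ω s * exp (α * |t - s|)

lemma hasGrowthRate_mul_exp_abs {α A : ℝ} (hα : 0 ≤ α) (hA : 0 ≤ A) :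
    HasGrowthRate (fun s ↦ A * exp (α * |s|)) α := fun s t ↦ by
  simp only [mul_assoc, ← exp_add, ← mul_add]
  gcongr
  simpa using abs_add_le s (t - s)

namespace HasGrowthRate

variable {ω : ℝ → ℝ} {α : ℝ}

lemma comp_neg (hω : HasGrowthRate ω α) : HasGrowthRate (fun s ↦ ω (-s)) α := fun s t ↦ by
  simpa only [neg_sub_neg, abs_sub_comm] using hω (-s) (-t)

lemma min_const {M : ℝ} (hω : HasGrowthRate ω α) (hα : 0 ≤ α) (hM : 0 ≤ M) :
    HasGrowthRate (fun s ↦ min (ω s) M) α := fun s t ↦ by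
  have one_le : 1 ≤ exp (α * |t - s|) := one_le_exp (by positivity)
  rw [min_mul_of_nonneg _ _ (exp_nonneg _)]
  exact min_le_min (hω s t) (le_mul_of_one_le_right hM one_le)

lemma div_const {d : ℝ} (hω : HasGrowthRate ω α) (hd : 0 ≤ d) :
    HasGrowthRate (fun s ↦ ω s / d) α := fun s t ↦ by
  rw [div_mul_eq_mul_div]
  exact div_le_div_of_nonneg_right (hω s t) hd

end HasGrowthRate

lemma hasDerivAt_exp_mul_smul {c s : ℝ} {I g : ℝ → E}
    (hI : HasDerivAt I (exp (-c * s) • g s) s) :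
    HasDerivAt (fun t ↦ exp (c * t) • I t) (c • (exp (c * s) • I s) + g s) s := by
  have hexp : HasDerivAt (fun t ↦ exp (c * t)) (exp (c * s) * c) s := by
    simpa using ((hasDerivAt_id s).const_mul c).exp
  convert! hexp.smul hI using 1
  rw [smul_smul, smul_smul, ← exp_add, add_comm, mul_comm c]
  simp

lemma abs_integral_exp_mul_abs {k : ℝ} (hk : k ≠ 0) (s : ℝ) :
    |∫ t in (0 : ℝ)..s, exp (k * |t|)| = |(exp (k * |s|) - 1) / k| := by
  have of_nonneg (r : ℝ) (hr : 0 ≤ r) :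
      ∫ t in (0 : ℝ)..r, exp (k * |t|) = (exp (k * r) - 1) / k := by
    have : EqOn (fun t ↦ exp (k * |t|)) (fun t ↦ exp (k * t)) (uIcc 0 r) := fun t ht ↦ by
      rw [uIcc_of_le hr] at ht
      simp only [abs_of_nonneg ht.1]
    rw [intervalIntegral.integral_congr this, intervalIntegral.integral_comp_mul_left _ hk,
      integral_exp]
    simp [div_eq_inv_mul]
  rcases le_total 0 s with hs | hs
  · rw [of_nonneg s hs, abs_of_nonneg hs]
  · have reflect := intervalIntegral.integral_comp_neg (a := 0) (b := s) fun t ↦ exp (k * |t|)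
    simp only [abs_neg, neg_zero] at reflect
    rw [reflect, intervalIntegral.integral_symm, abs_neg, of_nonneg (-s) (by linarith),
      abs_of_nonpos hs]

lemma abs_sub_of_mem_uIoc_zero {s t : ℝ} (ht : t ∈ uIoc 0 s) : |s - t| = |s| - |t| := by
  rcases mem_uIoc.mp ht with ⟨h0, h1⟩ | ⟨h0, h1⟩
  · rw [abs_of_nonneg (sub_nonneg.mpr h1), abs_of_nonneg (h0.le.trans h1), abs_of_pos h0]
  · rw [abs_of_neg (sub_neg.mpr h0), abs_of_neg (h0.trans_le h1), abs_of_nonpos h1]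
    ring

lemma norm_exp_smul_exp_smul_le_of_mem_uIoc {c α A : ℝ} {g : ℝ → E}
    (hg : ∀ t, ‖g t‖ ≤ A * exp (α * |t|)) {s t : ℝ} (ht : t ∈ uIoc 0 s) :
    ‖exp (c * s) • exp (-c * t) • g t‖ ≤ A * exp (|c| * |s|) * exp ((α - |c|) * |t|) := by
  have kernel_le : c * (s - t) ≤ |c| * (|s| - |t|) := by
    rw [← abs_sub_of_mem_uIoc_zero ht, ← abs_mul]
    exact le_abs_self _
  rw [smul_smul, ← exp_add, norm_smul, norm_of_nonneg (exp_nonneg _)]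
  calc exp (c * s + -c * t) * ‖g t‖
      ≤ exp (|c| * (|s| - |t|)) * (A * exp (α * |t|)) := by
        gcongr
        · linarith
        · exact hg t
    _ = A * exp (|c| * |s|) * exp ((α - |c|) * |t|) := by
        rw [mul_left_comm, mul_assoc, ← exp_add, ← exp_add]
        ring_nf

lemma norm_exp_smul_integral_exp_smul_le {c α A : ℝ} (hc : |c| < α) {g : ℝ → E}
    (hg : ∀ t, ‖g t‖ ≤ A * exp (α * |t|)) (s : ℝ) :
    ‖exp (c * s) • ∫ t in (0 : ℝ)..s, exp (-c * t) • g t‖ ≤ A * exp (α * |s|) / (α - |c|) := by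
  have gap : 0 < α - |c| := sub_pos.mpr hc
  have hA : 0 ≤ A := by simpa using (norm_nonneg _).trans (hg 0)
  rw [← intervalIntegral.integral_smul]
  calc ‖∫ t in (0 : ℝ)..s, exp (c * s) • exp (-c * t) • g t‖
      ≤ |∫ t in (0 : ℝ)..s, A * exp (|c| * |s|) * exp ((α - |c|) * |t|)| :=
        intervalIntegral.norm_integral_le_abs_of_norm_le
          (ae_restrict_of_forall_mem measurableSet_uIoc
            fun _ ht ↦ norm_exp_smul_exp_smul_le_of_mem_uIoc hg ht)
          (Continuous.intervalIntegrable (by fun_prop) _ _)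
    _ = A * exp (|c| * |s|) * ((exp ((α - |c|) * |s|) - 1) / (α - |c|)) := by
        have : 1 ≤ exp ((α - |c|) * |s|) := one_le_exp (by positivity)
        rw [intervalIntegral.integral_const_mul, abs_mul, abs_integral_exp_mul_abs gap.ne',
          abs_of_nonneg (by positivity), abs_of_nonneg (div_nonneg (sub_nonneg.mpr this) gap.le)]
    _ ≤ A * exp (|c| * |s|) * (exp ((α - |c|) * |s|) / (α - |c|)) := by
        gcongr
        linarith
    _ = A * exp (α * |s|) / (α - |c|) := by
        rw [← mul_div_assoc, mul_assoc, ← exp_add]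
        ring_nf

lemma norm_exp_smul_le_of_hasGrowthRate {c α : ℝ} {ω : ℝ → ℝ} (hω : HasGrowthRate ω α) {g : ℝ → E}
    (hg : ∀ t, ‖g t‖ ≤ ω t) {s t : ℝ} (hts : t ≤ s) :
    ‖exp (-c * t) • g t‖ ≤ ω s * exp (α * s) * exp ((-c - α) * t) := by
  have abs_eq : |t - s| = s - t := by rw [abs_sub_comm, abs_of_nonneg (sub_nonneg.mpr hts)]
  rw [norm_smul, norm_of_nonneg (exp_nonneg _)]
  calc exp (-c * t) * ‖g t‖ ≤ exp (-c * t) * (ω s * exp (α * (s - t))) := by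
        gcongr
        exact (hg t).trans (abs_eq ▸ hω s t)
    _ = ω s * exp (α * s) * exp ((-c - α) * t) := by
        rw [mul_left_comm, mul_assoc, ← exp_add, ← exp_add]
        ring_nf

lemma integrableOn_Iic_exp_smul {c α : ℝ} (hc : c < -α) {ω : ℝ → ℝ} (hω : HasGrowthRate ω α)
    {g : ℝ → E} (hgc : Continuous g) (hg : ∀ t, ‖g t‖ ≤ ω t) (s : ℝ) :
    IntegrableOn (fun t ↦ exp (-c * t) • g t) (Iic s) :=
  ((integrableOn_exp_mul_Iic (by linarith) s).const_mul (ω s * exp (α * s))).mono'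
    (by fun_prop) (ae_restrict_of_forall_mem measurableSet_Iic
      fun _ ht ↦ norm_exp_smul_le_of_hasGrowthRate hω hg ht)

lemma norm_exp_smul_integral_Iic_exp_smul_le {c α : ℝ} (hc : c < -α) {ω : ℝ → ℝ}
    (hω : HasGrowthRate ω α) {g : ℝ → E} (hg : ∀ t, ‖g t‖ ≤ ω t) (s : ℝ) :
    ‖exp (c * s) • ∫ t in Iic s, exp (-c * t) • g t‖ ≤ ω s / (-c - α) := by
  have gap : 0 < -c - α := by linarith
  have integral_le : ‖∫ t in Iic s, exp (-c * t) • g t‖ ≤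
      ∫ t in Iic s, ω s * exp (α * s) * exp ((-c - α) * t) :=
    norm_integral_le_of_norm_le ((integrableOn_exp_mul_Iic gap s).const_mul _)
      (ae_restrict_of_forall_mem measurableSet_Iic
        fun _ ht ↦ norm_exp_smul_le_of_hasGrowthRate hω hg ht)
  rw [integral_const_mul, integral_exp_mul_Iic gap] at integral_le
  rw [norm_smul, norm_of_nonneg (exp_nonneg _)]
  calc exp (c * s) * ‖∫ t in Iic s, exp (-c * t) • g t‖
      ≤ exp (c * s) * (ω s * exp (α * s) * (exp ((-c - α) * s) / (-c - α))) := by gcongr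
    _ = ω s * exp (c * s + α * s + (-c - α) * s) / (-c - α) := by
        rw [exp_add, exp_add]
        ring
    _ = ω s / (-c - α) := by
        ring_nf
        simp

lemma hasDerivAt_deriv_of_factorization {c : ℝ} {u v g : ℝ → E}
    (hu : ∀ s, HasDerivAt u (c • u s + v s) s) (hv : ∀ s, HasDerivAt v (-c • v s + g s) s) (s : ℝ) :
    HasDerivAt (deriv u) (c ^ 2 • u s + g s) s := by
  rw [funext fun t ↦ (hu t).deriv]
  convert! ((hu s).const_smul c).add (hv s) using 1
  module

lemma iteratedDeriv_two_of_factorization {c : ℝ} {u v g : ℝ → E}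
    (hu : ∀ s, HasDerivAt u (c • u s + v s) s) (hv : ∀ s, HasDerivAt v (-c • v s + g s) s) :
    iteratedDeriv 2 u = fun s ↦ c ^ 2 • u s + g s := by
  rw [iteratedDeriv_succ, iteratedDeriv_one]
  exact funext fun s ↦ (hasDerivAt_deriv_of_factorization hu hv s).deriv

lemma contDiff_two_of_factorization {c : ℝ} {u v g : ℝ → E} (hg : Continuous g)
    (hu : ∀ s, HasDerivAt u (c • u s + v s) s) (hv : ∀ s, HasDerivAt v (-c • v s + g s) s) :
    ContDiff ℝ 2 u := by
  have u_diff : Differentiable ℝ u := fun s ↦ (hu s).differentiableAt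
  have u'_diff : Differentiable ℝ (deriv u) :=
    fun s ↦ (hasDerivAt_deriv_of_factorization hu hv s).differentiableAt
  rw [show (2 : WithTop ℕ∞) = 1 + 1 by norm_num, contDiff_succ_iff_deriv, contDiff_one_iff_deriv,
    ← iteratedDeriv_one, ← iteratedDeriv_succ, iteratedDeriv_two_of_factorization hu hv,
    iteratedDeriv_one]
  exact ⟨u_diff, by simp, u'_diff, (u_diff.continuous.const_smul _).add hg⟩

lemma norm_iteratedDeriv_le_of_factorization {c B : ℝ} {u v g : ℝ → E}
    (hu : ∀ s, HasDerivAt u (c • u s + v s) s) (hv : ∀ s, HasDerivAt v (-c • v s + g s) s)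
    (hu_le : ∀ s, ‖u s‖ ≤ B) (hv_le : ∀ s, ‖v s‖ ≤ |c| * B) (hg_le : ∀ s, ‖g s‖ ≤ |c| ^ 2 * B)
    {k : ℕ} (hk : k ≤ 2) (s : ℝ) : ‖iteratedDeriv k u s‖ ≤ (2 * |c|) ^ k * B := by
  have cu_le : ‖c • u s‖ ≤ |c| * B := by
    rw [norm_smul, norm_eq_abs]
    gcongr
    exact hu_le s
  have ccu_le : ‖c ^ 2 • u s‖ ≤ |c| ^ 2 * B := by
    rw [norm_smul, norm_pow, norm_eq_abs]
    gcongr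
    exact hu_le s
  interval_cases k
  · simpa using hu_le s
  · rw [iteratedDeriv_one, (hu s).deriv]
    linarith [norm_add_le (c • u s) (v s), hv_le s]
  · rw [iteratedDeriv_two_of_factorization hu hv]
    have : 0 ≤ |c| ^ 2 * B := (norm_nonneg _).trans ccu_le
    linarith [norm_add_le (c ^ 2 • u s) (g s), hg_le s]

variable [CompleteSpace E]

lemma exists_hasDerivAt_of_abs_lt {c α A : ℝ} (hc : |c| < α) {g : ℝ → E} (hgc : Continuous g)
    (hg : ∀ t, ‖g t‖ ≤ A * exp (α * |t|)) :
    ∃ u : ℝ → E, (∀ s, HasDerivAt u (c • u s + g s) s) ∧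
      ∀ s, ‖u s‖ ≤ A * exp (α * |s|) / (α - |c|) :=
  ⟨fun s ↦ exp (c * s) • ∫ t in (0 : ℝ)..s, exp (-c * t) • g t,
    fun s ↦ hasDerivAt_exp_mul_smul <| HasStrictDerivAt.hasDerivAt <|
      Continuous.integral_hasStrictDerivAt (by fun_prop) 0 s,
    norm_exp_smul_integral_exp_smul_le hc hg⟩

lemma hasDerivAt_integral_Iic {h : ℝ → E} (hh : Continuous h) (hint : ∀ s, IntegrableOn h (Iic s))
    (s : ℝ) : HasDerivAt (fun r ↦ ∫ t in Iic r, h t) (h s) s := by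
  have split (r : ℝ) : ∫ t in Iic r, h t = (∫ t in Iic 0, h t) + ∫ t in (0 : ℝ)..r, h t := by
    rw [← intervalIntegral.integral_Iic_sub_Iic (hint 0) (hint r), add_sub_cancel]
  rw [funext split]
  exact (hh.integral_hasStrictDerivAt 0 s).hasDerivAt.const_add _

lemma exists_hasDerivAt_of_lt_neg {c α : ℝ} (hc : c < -α) {ω : ℝ → ℝ} (hω : HasGrowthRate ω α)
    {g : ℝ → E} (hgc : Continuous g) (hg : ∀ t, ‖g t‖ ≤ ω t) :
    ∃ u : ℝ → E, (∀ s, HasDerivAt u (c • u s + g s) s) ∧ ∀ s, ‖u s‖ ≤ ω s / (-c - α) :=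
  ⟨fun s ↦ exp (c * s) • ∫ t in Iic s, exp (-c * t) • g t,
    fun s ↦ hasDerivAt_exp_mul_smul
      (hasDerivAt_integral_Iic (by fun_prop) (integrableOn_Iic_exp_smul hc hω hgc hg) s),
    norm_exp_smul_integral_Iic_exp_smul_le hc hω hg⟩

lemma exists_hasDerivAt_of_lt_abs {c α : ℝ} (hc : α < |c|) {ω : ℝ → ℝ} (hω : HasGrowthRate ω α)
    {g : ℝ → E} (hgc : Continuous g) (hg : ∀ t, ‖g t‖ ≤ ω t) :
    ∃ u : ℝ → E, (∀ s, HasDerivAt u (c • u s + g s) s) ∧ ∀ s, ‖u s‖ ≤ ω s / (|c| - α) := by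
  rcases le_total c 0 with hc0 | hc0
  · rw [abs_of_nonpos hc0] at hc ⊢
    exact exists_hasDerivAt_of_lt_neg (by linarith) hω hgc hg
  · rw [abs_of_nonneg hc0] at hc ⊢
    obtain ⟨v, hv, hv_le⟩ := exists_hasDerivAt_of_lt_neg (c := -c) (g := fun t ↦ -g (-t))
      (neg_lt_neg hc) hω.comp_neg (by fun_prop) fun t ↦ (norm_neg _).trans_le (hg (-t))
    refine ⟨fun s ↦ v (-s), fun s ↦ ?_, fun s ↦ by simpa using hv_le (-s)⟩
    convert! (hv (-s)).scomp s (hasDerivAt_neg s) using 1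
    simp

lemma exists_mode_solution_of_abs_lt {c α A : ℝ} (hc : |c| < α) {g : ℝ → E} (hgc : Continuous g)
    (hg : ∀ t, ‖g t‖ ≤ A * exp (α * |t|)) :
    ∃ u : ℝ → E, ContDiff ℝ 2 u ∧ (iteratedDeriv 2 u = fun s ↦ c ^ 2 • u s + g s) ∧
      ∀ s, ‖u s‖ ≤ A * exp (α * |s|) / (|c| - α) ^ 2 := by
  obtain ⟨v, hv, hv_le⟩ := exists_hasDerivAt_of_abs_lt ((abs_neg c).trans_lt hc) hgc hg
  simp only [abs_neg, mul_div_right_comm] at hv_le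
  obtain ⟨u, hu, hu_le⟩ := exists_hasDerivAt_of_abs_lt hc
    (continuous_iff_continuousAt.mpr fun s ↦ (hv s).continuousAt) hv_le
  refine ⟨u, contDiff_two_of_factorization hgc hu hv, iteratedDeriv_two_of_factorization hu hv,
    fun s ↦ (hu_le s).trans_eq ?_⟩
  rw [sub_sq_comm, mul_div_right_comm, div_div, ← sq, mul_div_right_comm]

lemma exists_mode_solution_of_lt_abs {c α A M : ℝ} (hα : 0 ≤ α) (hc : α < |c|) {g : ℝ → E}
    (hgc : Continuous g) (hg : ∀ t, ‖g t‖ ≤ A * exp (α * |t|)) (hgM : ∀ t, ‖g t‖ ≤ M) :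
    ∃ u : ℝ → E, ContDiff ℝ 2 u ∧ (iteratedDeriv 2 u = fun s ↦ c ^ 2 • u s + g s) ∧
      (∀ s, ‖u s‖ ≤ A * exp (α * |s|) / (|c| - α) ^ 2) ∧
      ∀ k ≤ 2, ∀ s, ‖iteratedDeriv k u s‖ ≤ (2 * |c|) ^ k * (M / (|c| - α) ^ 2) := by
  have gap : 0 < |c| - α := sub_pos.mpr hc
  have gap_le : |c| - α ≤ |c| := sub_le_self _ hα
  have hA : 0 ≤ A := by simpa using (norm_nonneg _).trans (hg 0)
  have hM : 0 ≤ M := (norm_nonneg _).trans (hgM 0)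
  -- One weight carries both bounds on `g`, hence both bounds pass to the same solution.
  set ω : ℝ → ℝ := fun s ↦ min (A * exp (α * |s|)) M
  have hω : HasGrowthRate ω α := (hasGrowthRate_mul_exp_abs hα hA).min_const hα hM
  obtain ⟨v, hv, hv_le⟩ := exists_hasDerivAt_of_lt_abs (c := -c) (by rwa [abs_neg]) hω hgc
    fun t ↦ le_min (hg t) (hgM t)
  rw [abs_neg] at hv_le
  obtain ⟨u, hu, hu_le⟩ := exists_hasDerivAt_of_lt_abs hc (hω.div_const gap.le)
    (continuous_iff_continuousAt.mpr fun s ↦ (hv s).continuousAt) hv_le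
  simp only [div_div, ← sq] at hu_le
  refine ⟨u, contDiff_two_of_factorization hgc hu hv, iteratedDeriv_two_of_factorization hu hv,
    fun s ↦ (hu_le s).trans ?_, fun k hk s ↦ norm_iteratedDeriv_le_of_factorization hu hv
      (fun s ↦ (hu_le s).trans ?_) (fun s ↦ (hv_le s).trans ?_) (fun s ↦ (hgM s).trans ?_) hk s⟩
  · gcongr
    exact min_le_left _ _
  · gcongr
    exact min_le_right _ _
  · calc ω s / (|c| - α) ≤ M / (|c| - α) := by gcongr; exact min_le_right _ _
      _ = (|c| - α) * (M / (|c| - α) ^ 2) := by field_simp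
      _ ≤ |c| * (M / (|c| - α) ^ 2) := by gcongr
  · calc M = (|c| - α) ^ 2 * (M / (|c| - α) ^ 2) := by field_simp
      _ ≤ |c| ^ 2 * (M / (|c| - α) ^ 2) := by gcongr

lemma exists_mode_solution {c α A M : ℝ} (hα : 0 ≤ α) (hc : |c| ≠ α) {g : ℝ → E}
    (hgc : Continuous g) (hg : ∀ t, ‖g t‖ ≤ A * exp (α * |t|))
    (hgM : α < |c| → ∀ t, ‖g t‖ ≤ M) :
    ∃ u : ℝ → E, ContDiff ℝ 2 u ∧ (iteratedDeriv 2 u = fun s ↦ c ^ 2 • u s + g s) ∧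
      (∀ s, ‖u s‖ ≤ A * exp (α * |s|) / (|c| - α) ^ 2) ∧
      (α < |c| → ∀ k ≤ 2, ∀ s, ‖iteratedDeriv k u s‖ ≤ (2 * |c|) ^ k * (M / (|c| - α) ^ 2)) := by
  rcases hc.lt_or_gt with hc | hc
  · obtain ⟨u, u_contDiff, u_ode, u_le⟩ := exists_mode_solution_of_abs_lt hc hgc hg
    exact ⟨u, u_contDiff, u_ode, u_le, fun h ↦ absurd h hc.not_gt⟩
  · obtain ⟨u, u_contDiff, u_ode, u_le, u_deriv_le⟩ :=
      exists_mode_solution_of_lt_abs hα hc hgc hg (hgM hc)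
    exact ⟨u, u_contDiff, u_ode, u_le, fun _ ↦ u_deriv_le⟩

end ModeEquation

section FourierCoefficients

variable {a b T : ℝ}

lemma norm_fourier_apply (n : ℤ) (x : AddCircle T) : ‖fourier n x‖ = 1 :=
  Circle.norm_coe _

lemma norm_fourierCoeffOn_le (hab : a < b) {φ : ℝ → ℂ} {K : ℝ} (hφ : ∀ x ∈ Icc a b, ‖φ x‖ ≤ K)
    (n : ℤ) : ‖fourierCoeffOn hab φ n‖ ≤ K := by
  have gap : 0 < b - a := sub_pos.mpr hab
  have integral_le : ‖∫ x in a..b, fourier (-n) (x : AddCircle (b - a)) • φ x‖ ≤ K * |b - a| :=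
    intervalIntegral.norm_integral_le_of_norm_le_const fun x hx ↦ by
      rw [uIoc_of_le hab.le] at hx
      rw [norm_smul, norm_fourier_apply, one_mul]
      exact hφ x (Ioc_subset_Icc_self hx)
  rw [abs_of_pos gap] at integral_le
  rw [fourierCoeffOn_eq_integral, norm_smul, norm_of_nonneg (by positivity), one_div_mul_eq_div]
  exact (div_le_iff₀ gap).mpr integral_le

lemma fourierCoeffOn_eq_of_hasDerivAt (hab : a < b) {φ φ' : ℝ → ℂ} {n : ℤ} (hn : n ≠ 0)
    (hφ : ∀ x, HasDerivAt φ (φ' x) x) (hφ' : Continuous φ') (hper : φ b = φ a) :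
    fourierCoeffOn hab φ n =
      (b - a : ℂ) / (2 * π * Complex.I * n) * fourierCoeffOn hab φ' n := by
  rw [fourierCoeffOn_of_hasDerivAt hab hn (fun x _ ↦ hφ x) (hφ'.intervalIntegrable a b), hper,
    sub_self]
  ring

lemma periodic_deriv {E : Type*} [NormedAddCommGroup E] [NormedSpace ℝ E] {φ : ℝ → E}
    (hper : Function.Periodic φ T) :
    Function.Periodic (deriv φ) T := fun x ↦ by
  rw [← deriv_comp_add_const, funext hper]

lemma norm_fourierCoeffOn_le_of_contDiff_two (hab : a < b) {φ : ℝ → ℂ} (hφ : ContDiff ℝ 2 φ)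
    (hper : Function.Periodic φ (b - a)) {K : ℝ} (hK : ∀ x ∈ Icc a b, ‖iteratedDeriv 2 φ x‖ ≤ K)
    {n : ℤ} (hn : n ≠ 0) : ‖fourierCoeffOn hab φ n‖ ≤ ((b - a) / (2 * π * |(n : ℝ)|)) ^ 2 * K := by
  have hφ' : ContDiff ℝ 1 (deriv φ) := hφ.deriv'
  have endpoints {ψ : ℝ → ℂ} (hψ : Function.Periodic ψ (b - a)) : ψ b = ψ a := by
    simpa using hψ a
  have deriv_once := fourierCoeffOn_eq_of_hasDerivAt hab hn
    (fun x ↦ (hφ.differentiable two_ne_zero x).hasDerivAt) hφ'.continuous (endpoints hper)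
  have deriv_twice := fourierCoeffOn_eq_of_hasDerivAt hab hn
    (fun x ↦ (hφ'.differentiable one_ne_zero x).hasDerivAt) (hφ'.continuous_deriv le_rfl)
    (endpoints (periodic_deriv hper))
  rw [iteratedDeriv_succ, iteratedDeriv_one] at hK
  have factor_norm : ‖(b - a : ℂ) / (2 * π * Complex.I * n)‖ = (b - a) / (2 * π * |(n : ℝ)|) := by
    rw [← Complex.ofReal_sub, norm_div, Complex.norm_real, norm_of_nonneg (sub_nonneg.mpr hab.le)]
    simp [abs_of_pos pi_pos]
  rw [deriv_once, deriv_twice, ← mul_assoc, ← sq, norm_mul, norm_pow, factor_norm]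
  gcongr
  exact norm_fourierCoeffOn_le hab hK n

lemma hasSum_fourierCoeffOn_mul_fourier (hT : 0 < T) {φ : ℝ → ℂ} (hφ : Continuous φ)
    (hper : Function.Periodic φ T) (hsum : Summable (fourierCoeffOn hT φ)) (x : ℝ) :
    HasSum (fun n ↦ fourierCoeffOn hT φ n * fourier n (x : AddCircle T)) (φ x) := by
  have : Fact (0 < T) := ⟨hT⟩
  let Φ : C(AddCircle T, ℂ) := ⟨hper.lift, continuous_coinduced_dom.mpr hφ⟩
  have coeff_eq : fourierCoeff Φ = fourierCoeffOn hT φ := funext fun n ↦ by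
    rw [fourierCoeff_eq_intervalIntegral Φ n 0, fourierCoeffOn_eq_integral, zero_add, sub_zero]
    rfl
  rw [← coeff_eq] at hsum ⊢
  exact has_pointwise_sum_fourier_series_of_summable hsum x

lemma continuous_fourierCoeffOn {X : Type*} [TopologicalSpace X] [FirstCountableTopology X]
    (hab : a < b) {F : X → ℝ → ℂ} (hF : Continuous (Function.uncurry F)) (n : ℤ) :
    Continuous fun x ↦ fourierCoeffOn hab (F x) n := by
  simp only [fourierCoeffOn_eq_integral]
  have fourier_continuous : Continuous fun t : ℝ ↦ fourier (-n) (t : AddCircle (b - a)) :=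
    (map_continuous _).comp (AddCircle.continuous_mk' _)
  exact (intervalIntegral.continuous_parametric_intervalIntegral_of_continuous'
    ((fourier_continuous.comp continuous_snd).smul hF) a b).const_smul _

lemma contDiff_fourier (n : ℤ) {k : WithTop ℕ∞} :
    ContDiff ℝ k fun x : ℝ ↦ fourier n (x : AddCircle T) := by
  have : ContDiff ℝ k Complex.ofReal := Complex.ofRealCLM.contDiff
  simp only [fourier_coe_apply]
  fun_prop

lemma iteratedDeriv_fourier (T : ℝ) (n : ℤ) (k : ℕ) :
    iteratedDeriv k (fun x : ℝ ↦ fourier n (x : AddCircle T)) =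
      fun x : ℝ ↦ (2 * π * Complex.I * n / T) ^ k * fourier n (x : AddCircle T) := by
  induction k with
  | zero => simp
  | succ k ih =>
    ext x
    rw [iteratedDeriv_succ, ih, ((hasDerivAt_fourier T n x).const_mul _).deriv]
    ring

end FourierCoefficients

section Derivatives

variable {E F : Type*} [NormedAddCommGroup E] [NormedSpace ℝ E] [NormedAddCommGroup F]
  [NormedSpace ℝ F]

lemma iteratedDeriv_comp_add_smul {V : E → F} {k : ℕ} (hV : ContDiff ℝ k V) (p v : E) (t : ℝ) :
    iteratedDeriv k (fun x : ℝ ↦ V (p + x • v)) t = iteratedFDeriv ℝ k V (p + t • v) fun _ ↦ v := by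
  have := (ContinuousLinearMap.toSpanSingleton ℝ v).iteratedFDeriv_comp_right
    (f := fun q ↦ V (q + p)) (by fun_prop) t le_rfl
  rw [iteratedDeriv_eq_iteratedFDeriv]
  simp only [add_comm p]
  simpa [Function.comp_def, iteratedFDeriv_comp_add_right] using congrArg (fun m ↦ m fun _ ↦ 1) this

lemma norm_iteratedFDeriv_comp_clm_le {u : ℝ → F} {k : ℕ} (hu : ContDiff ℝ k u) {L : E →L[ℝ] ℝ}
    (hL : ‖L‖ ≤ 1) (p : E) :
    ‖iteratedFDeriv ℝ k (fun q ↦ u (L q)) p‖ ≤ ‖iteratedDeriv k u (L p)‖ := by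
  rw [← norm_iteratedFDeriv_eq_norm_iteratedDeriv]
  refine (congrArg norm (L.iteratedFDeriv_comp_right hu p le_rfl)).trans_le ?_
  refine (ContinuousMultilinearMap.norm_compContinuousLinearMap_le _ _).trans ?_
  exact mul_le_of_le_one_right (norm_nonneg _)
    (Finset.prod_le_one (fun _ _ ↦ norm_nonneg _) fun _ _ ↦ hL)

lemma norm_iteratedFDeriv_mul_prod_le {R : Type*} [NormedRing R] [NormedAlgebra ℝ R] {u φ : ℝ → R}
    {k : ℕ} (hu : ContDiff ℝ k u) (hφ : ContDiff ℝ k φ) {a b B : ℝ} (ha : 0 ≤ a)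
    (hu_le : ∀ i ≤ k, ∀ s, ‖iteratedDeriv i u s‖ ≤ a ^ i * B)
    (hφ_le : ∀ i ≤ k, ∀ θ, ‖iteratedDeriv i φ θ‖ ≤ b ^ i) (p : ℝ × ℝ) :
    ‖iteratedFDeriv ℝ k (fun q : ℝ × ℝ ↦ u q.1 * φ q.2) p‖ ≤ (a + b) ^ k * B := by
  have hB : 0 ≤ B := by simpa using (norm_nonneg _).trans (hu_le 0 (Nat.zero_le k) 0)
  have fst_le (i : ℕ) (hi : i ≤ k) :
      ‖iteratedFDeriv ℝ i (fun q : ℝ × ℝ ↦ u q.1) p‖ ≤ a ^ i * B :=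
    (norm_iteratedFDeriv_comp_clm_le (hu.of_le (by exact_mod_cast hi))
      (ContinuousLinearMap.norm_fst_le ℝ ℝ ℝ) p).trans (hu_le i hi _)
  have snd_le (i : ℕ) (hi : i ≤ k) :
      ‖iteratedFDeriv ℝ i (fun q : ℝ × ℝ ↦ φ q.2) p‖ ≤ b ^ i :=
    (norm_iteratedFDeriv_comp_clm_le (hφ.of_le (by exact_mod_cast hi))
      (ContinuousLinearMap.norm_snd_le ℝ ℝ ℝ) p).trans (hφ_le i hi _)
  refine (norm_iteratedFDeriv_mul_le (hu.comp contDiff_fst) (hφ.comp contDiff_snd) p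
    le_rfl).trans ?_
  rw [add_pow, Finset.sum_mul]
  refine Finset.sum_le_sum fun i hi ↦ ?_
  have hik : i ≤ k := Finset.mem_range_succ_iff.mp hi
  calc _ ≤ (k.choose i : ℝ) * (a ^ i * B) * b ^ (k - i) := by
        gcongr
        exacts [fst_le i hik, snd_le _ (k.sub_le i)]
    _ = a ^ i * b ^ (k - i) * k.choose i * B := by ring

lemma iteratedFDeriv_tsum_of_eventually [CompleteSpace F] {ι : Type*} {f : ι → E → F} {N : ℕ∞}
    {v : ℕ → ι → ℝ} (hf : ∀ i, ContDiff ℝ N (f i)) (hv : ∀ k : ℕ, k ≤ N → Summable (v k))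
    (hfv : ∀ᶠ i in cofinite, ∀ k : ℕ, k ≤ N → ∀ x, ‖iteratedFDeriv ℝ k (f i) x‖ ≤ v k i)
    {k : ℕ} (hk : k ≤ N) :
    iteratedFDeriv ℝ k (fun x ↦ ∑' i, f i x) = fun x ↦ ∑' i, iteratedFDeriv ℝ k (f i) x := by
  classical
  have summable (j : ℕ) (hj : j ≤ N) (x : E) : Summable fun i ↦ iteratedFDeriv ℝ j (f i) x :=
    Summable.of_norm_bounded_eventually (hv j hj) (hfv.mono fun i hi ↦ hi j hj x)
  have summable_f (x : E) : Summable fun i ↦ f i x :=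
    Summable.of_norm_bounded_eventually (hv 0 (by simp)) <| hfv.mono fun i hi ↦ by
      simpa using hi 0 (by simp) x
  have hfk (i : ι) : ContDiff ℝ k (f i) := (hf i).of_le (by exact_mod_cast hk)
  obtain ⟨S, hS⟩ : ∃ S : Finset ι, ∀ i ∉ S, ∀ k : ℕ, k ≤ N → ∀ x,
      ‖iteratedFDeriv ℝ k (f i) x‖ ≤ v k i :=
    ⟨hfv.toFinset, fun i hi ↦ not_not.mp fun h ↦ hi (hfv.mem_toFinset.mpr h)⟩
  have tail_summable (j : ℕ) (hj : j ≤ N) : Summable fun i : {i // i ∉ S} ↦ v j i :=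
    (hv j hj).subtype {i | i ∉ S}
  have tail_bound (j : ℕ) (i : {i // i ∉ S}) (x : E) (hj : j ≤ N) :
      ‖iteratedFDeriv ℝ j (f i) x‖ ≤ v j i := hS i i.2 j hj x
  have tail_contDiff : ContDiff ℝ k fun x ↦ ∑' i : {i // i ∉ S}, f i x :=
    (contDiff_tsum (fun i : {i // i ∉ S} ↦ hf i) tail_summable tail_bound).of_le
      (by exact_mod_cast hk)
  have tail_deriv := iteratedFDeriv_tsum (fun i : {i // i ∉ S} ↦ hf i) tail_summable tail_bound hk
  have split : (fun x ↦ ∑' i, f i x) =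
      (fun x ↦ ∑ i ∈ S, f i x) + fun x ↦ ∑' i : {i // i ∉ S}, f i x :=
    funext fun x ↦ ((summable_f x).sum_add_tsum_subtype_compl S).symm
  rw [split, iteratedFDeriv_add (ContDiff.sum fun i _ ↦ hfk i) tail_contDiff,
    iteratedFDeriv_sum fun i _ ↦ hfk i, tail_deriv]
  ext1 x
  rw [Pi.add_apply, Finset.sum_apply, (summable k hk x).sum_add_tsum_subtype_compl S]

end Derivatives

section CylinderLaplacian

variable {E F : Type*} [NormedAddCommGroup E] [NormedSpace ℝ E] [NormedAddCommGroup F]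
  [NormedSpace ℝ F]

/-- The Laplace operator `∂²/∂s² + ∂²/∂θ²` of the cylinder, for functions on its universal cover
`ℝ × ℝ`. -/
noncomputable def cylLaplacian (V : ℝ × ℝ → E) (p : ℝ × ℝ) : E :=
  iteratedDeriv 2 (fun s ↦ V (s, p.2)) p.1 + iteratedDeriv 2 (fun θ ↦ V (p.1, θ)) p.2

lemma iteratedDeriv_fst_eq_iteratedFDeriv {V : ℝ × ℝ → E} {k : ℕ} (hV : ContDiff ℝ k V)
    (s θ : ℝ) :
    iteratedDeriv k (fun x ↦ V (x, θ)) s = iteratedFDeriv ℝ k V (s, θ) fun _ ↦ (1, 0) := by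
  simpa using iteratedDeriv_comp_add_smul hV (0, θ) (1, 0) s

lemma iteratedDeriv_snd_eq_iteratedFDeriv {V : ℝ × ℝ → E} {k : ℕ} (hV : ContDiff ℝ k V)
    (s θ : ℝ) :
    iteratedDeriv k (fun y ↦ V (s, y)) θ = iteratedFDeriv ℝ k V (s, θ) fun _ ↦ (0, 1) := by
  simpa using iteratedDeriv_comp_add_smul hV (s, 0) (0, 1) θ

lemma cylLaplacian_eq_iteratedFDeriv {V : ℝ × ℝ → E} (hV : ContDiff ℝ 2 V) (p : ℝ × ℝ) :
    cylLaplacian V p =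
      iteratedFDeriv ℝ 2 V p (fun _ ↦ (1, 0)) + iteratedFDeriv ℝ 2 V p fun _ ↦ (0, 1) := by
  rw [cylLaplacian, iteratedDeriv_fst_eq_iteratedFDeriv hV, iteratedDeriv_snd_eq_iteratedFDeriv hV]

lemma cylLaplacian_clm_comp (L : E →L[ℝ] F) {V : ℝ × ℝ → E} (hV : ContDiff ℝ 2 V) (p : ℝ × ℝ) :
    cylLaplacian (fun q ↦ L (V q)) p = L (cylLaplacian V p) := by
  have comp_left : iteratedFDeriv ℝ 2 (fun q ↦ L (V q)) p =
      L.compContinuousMultilinearMap (iteratedFDeriv ℝ 2 V p) :=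
    L.iteratedFDeriv_comp_left hV.contDiffAt le_rfl
  rw [cylLaplacian_eq_iteratedFDeriv (V := fun q ↦ L (V q)) (L.contDiff.comp hV),
    cylLaplacian_eq_iteratedFDeriv hV, comp_left, map_add]
  rfl

lemma cylLaplacian_tsum [CompleteSpace E] {ι : Type*} {V : ι → ℝ × ℝ → E} {M : ι → ℝ}
    (hV : ∀ i, ContDiff ℝ 2 (V i)) (hM : Summable M)
    (hVM : ∀ᶠ i in cofinite, ∀ k ≤ 2, ∀ p, ‖iteratedFDeriv ℝ k (V i) p‖ ≤ M i) (p : ℝ × ℝ) :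
    cylLaplacian (fun q ↦ ∑' i, V i q) p = ∑' i, cylLaplacian (V i) p := by
  have hVM' : ∀ᶠ i in cofinite, ∀ k : ℕ, k ≤ (2 : ℕ∞) → ∀ p, ‖iteratedFDeriv ℝ k (V i) p‖ ≤ M i :=
    hVM.mono fun i hi k hk ↦ hi k (by exact_mod_cast hk)
  have tsum_contDiff : ContDiff ℝ 2 fun q ↦ ∑' i, V i q :=
    contDiff_tsum_of_eventually (N := 2) hV (fun _ _ ↦ hM) fun k hk ↦ hVM'.mono fun i hi ↦ hi k hk
  have deriv_summable : Summable fun i ↦ iteratedFDeriv ℝ 2 (V i) p :=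
    .of_norm_bounded_eventually hM (hVM.mono fun i hi ↦ hi 2 le_rfl p)
  have deriv_apply (w : ℝ × ℝ) : HasSum (fun i ↦ iteratedFDeriv ℝ 2 (V i) p fun _ ↦ w)
      (iteratedFDeriv ℝ 2 (fun q ↦ ∑' i, V i q) p fun _ ↦ w) := by
    rw [iteratedFDeriv_tsum_of_eventually (N := 2) hV (fun _ _ ↦ hM) hVM' le_rfl]
    exact ContinuousMultilinearMap.hasSum_eval deriv_summable.hasSum _
  simp only [cylLaplacian_eq_iteratedFDeriv tsum_contDiff,
    fun i ↦ cylLaplacian_eq_iteratedFDeriv (hV i)]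
  exact ((deriv_apply (1, 0)).add (deriv_apply (0, 1))).tsum_eq.symm

lemma cylLaplacian_mul_fourier {n : ℤ} {u g : ℝ → ℂ}
    (hu : iteratedDeriv 2 u = fun s ↦ (n : ℝ) ^ 2 • u s + g s) (p : ℝ × ℝ) :
    cylLaplacian (fun q ↦ u q.1 * fourier n (q.2 : AddCircle (2 * π))) p =
      g p.1 * fourier n (p.2 : AddCircle (2 * π)) := by
  have fst : iteratedDeriv 2 (fun s ↦ u s * fourier n (p.2 : AddCircle (2 * π))) p.1 =
      ((n : ℝ) ^ 2 • u p.1 + g p.1) * fourier n (p.2 : AddCircle (2 * π)) := by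
    simp only [mul_comm (u _), iteratedDeriv_const_mul_field, hu]
    ring
  have snd : iteratedDeriv 2 (fun θ : ℝ ↦ u p.1 * fourier n (θ : AddCircle (2 * π))) p.2 =
      u p.1 * ((Complex.I * n) ^ 2 * fourier n (p.2 : AddCircle (2 * π))) := by
    rw [iteratedDeriv_const_mul_field, iteratedDeriv_fourier]
    push_cast
    field_simp
  rw [cylLaplacian, fst, snd, mul_pow, Complex.I_sq, Complex.real_smul]
  push_cast
  ring

end CylinderLaplacian

section InfiniteCylinder

lemma eventually_cofinite_lt_abs_intCast (α : ℝ) : ∀ᶠ n : ℤ in cofinite, α < |(n : ℝ)| :=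
  (tendsto_norm_cocompact_atTop.comp Int.tendsto_coe_cofinite).eventually_gt_atTop α

lemma summable_one_div_abs_intCast_sub_sq (α : ℝ) :
    Summable fun n : ℤ ↦ 1 / (|(n : ℝ)| - α) ^ 2 := by
  refine Summable.of_norm_bounded_eventually
    ((Real.summable_one_div_int_pow.mpr one_lt_two).mul_left 4) ?_
  filter_upwards [eventually_cofinite_lt_abs_intCast (2 * α), eventually_cofinite_lt_abs_intCast 0]
    with n hα h0
  have half_le : |(n : ℝ)| / 2 ≤ |(n : ℝ)| - α := by linarith
  calc ‖1 / (|(n : ℝ)| - α) ^ 2‖ = 1 / (|(n : ℝ)| - α) ^ 2 := norm_of_nonneg (by positivity)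
    _ ≤ 1 / (|(n : ℝ)| / 2) ^ 2 := by gcongr
    _ = 4 * (1 / (n : ℝ) ^ 2) := by
        rw [div_pow, sq_abs]
        field_simp
        norm_num

lemma norm_iteratedFDeriv_mul_fourier_le {n : ℤ} (hn : n ≠ 0) {u : ℝ → ℂ} (hu : ContDiff ℝ 2 u)
    {B : ℝ} (hu_le : ∀ k ≤ 2, ∀ s, ‖iteratedDeriv k u s‖ ≤ (2 * |(n : ℝ)|) ^ k * (B / n ^ 2))
    {k : ℕ} (hk : k ≤ 2) (p : ℝ × ℝ) :
    ‖iteratedFDeriv ℝ k (fun q : ℝ × ℝ ↦ u q.1 * fourier n (q.2 : AddCircle (2 * π))) p‖ ≤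
      9 * B := by
  have one_le : 1 ≤ |(n : ℝ)| := by exact_mod_cast Int.one_le_abs hn
  have hB : 0 ≤ B / n ^ 2 := by simpa using (norm_nonneg _).trans (hu_le 0 zero_le_two 0)
  have fourier_le (i : ℕ) (θ : ℝ) :
      ‖iteratedDeriv i (fun x : ℝ ↦ fourier n (x : AddCircle (2 * π))) θ‖ ≤ |(n : ℝ)| ^ i := by
    rw [iteratedDeriv_fourier, norm_mul, norm_fourier_apply]
    simp [mul_div_assoc, mul_comm]
  calc _ ≤ (2 * |(n : ℝ)| + |(n : ℝ)|) ^ k * (B / n ^ 2) :=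
        norm_iteratedFDeriv_mul_prod_le (hu.of_le (by exact_mod_cast hk)) (contDiff_fourier n)
          (by positivity) (fun i hi ↦ hu_le i (hi.trans hk)) (fun i _ ↦ fourier_le i) p
    _ ≤ (2 * |(n : ℝ)| + |(n : ℝ)|) ^ 2 * (B / n ^ 2) := by
        gcongr
        linarith
    _ = 9 * B := by
        rw [← sq_abs (n : ℝ)]
        field_simp
        ring

lemma exists_cylLaplacian_eq_of_hasSum_fourier {α A K : ℝ} (hα : 0 ≤ α) (hαn : ∀ n : ℤ, α ≠ n)
    {F : ℝ → ℝ → ℂ} {g : ℤ → ℝ → ℂ} (hgc : ∀ n, Continuous (g n))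
    (hgA : ∀ n s, ‖g n s‖ ≤ A * exp (α * |s|)) (hgK : ∀ n ≠ 0, ∀ s, ‖g n s‖ ≤ K / n ^ 2)
    (hF : ∀ s θ : ℝ, HasSum (fun n ↦ g n s * fourier n (θ : AddCircle (2 * π))) (F s θ)) :
    ∃ V : ℝ × ℝ → ℂ, ContDiff ℝ 2 V ∧ (∀ s, Function.Periodic (fun θ ↦ V (s, θ)) (2 * π)) ∧
      (∀ s θ, cylLaplacian V (s, θ) = F s θ) ∧
      ∀ s θ, ‖V (s, θ)‖ ≤ (∑' n : ℤ, 1 / (|(n : ℝ)| - α) ^ 2) * (A * exp (α * |s|)) := by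
  have abs_ne (n : ℤ) : |(n : ℝ)| ≠ α := by exact_mod_cast (hαn |n|).symm
  have ne_zero {n : ℤ} (hn : α < |(n : ℝ)|) : n ≠ 0 := by
    rintro rfl
    simpa using hα.trans_lt hn
  choose u u_contDiff u_ode u_le u_deriv_le using fun n : ℤ ↦
    exists_mode_solution hα (abs_ne n) (hgc n) (hgA n) fun hn ↦ hgK n (ne_zero hn)
  set V : ℤ → ℝ × ℝ → ℂ := fun n p ↦ u n p.1 * fourier n (p.2 : AddCircle (2 * π))
  have V_contDiff (n : ℤ) : ContDiff ℝ 2 (V n) :=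
    ((u_contDiff n).comp contDiff_fst).mul ((contDiff_fourier n).comp contDiff_snd)
  have weight_summable := summable_one_div_abs_intCast_sub_sq α
  have majorant_summable := (weight_summable.mul_left K).mul_left 9
  have V_deriv_le : ∀ᶠ n in cofinite, ∀ k ≤ 2, ∀ p,
      ‖iteratedFDeriv ℝ k (V n) p‖ ≤ 9 * (K * (1 / (|(n : ℝ)| - α) ^ 2)) := by
    filter_upwards [eventually_cofinite_lt_abs_intCast α] with n hn k hk p
    refine norm_iteratedFDeriv_mul_fourier_le (ne_zero hn) (u_contDiff n) (fun k hk s ↦ ?_) hk p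
    convert u_deriv_le n hn k hk s using 2
    ring
  refine ⟨fun p ↦ ∑' n, V n p, ?_, fun s θ ↦ ?_, fun s θ ↦ ?_, fun s θ ↦ ?_⟩
  · exact contDiff_tsum_of_eventually (N := 2) V_contDiff (fun _ _ ↦ majorant_summable)
      fun k hk ↦ V_deriv_le.mono fun n hn ↦ hn k (by exact_mod_cast hk)
  · simp only [V, AddCircle.coe_add_period]
  · rw [cylLaplacian_tsum V_contDiff majorant_summable V_deriv_le]
    exact (tsum_congr fun n ↦ cylLaplacian_mul_fourier (u_ode n) (s, θ)).trans (hF s θ).tsum_eq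
  · refine tsum_of_norm_bounded (weight_summable.hasSum.mul_right _) fun n ↦ ?_
    rw [norm_mul, norm_fourier_apply, mul_one, one_div_mul_eq_div]
    exact u_le n s

lemma exists_cylLaplacian_eq {α A K : ℝ} (hα : 0 ≤ α) (hαn : ∀ n : ℤ, α ≠ n)
    {F : ℝ → ℝ → ℂ} (hFc : Continuous (Function.uncurry F)) (hF : ∀ s, ContDiff ℝ 2 (F s))
    (hper : ∀ s, Function.Periodic (F s) (2 * π))
    (hFA : ∀ s θ, ‖F s θ‖ ≤ A * exp (α * |s|))
    (hFK : ∀ s, ∀ θ ∈ Icc 0 (2 * π), ‖iteratedDeriv 2 (F s) θ‖ ≤ K) :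
    ∃ V : ℝ × ℝ → ℂ, ContDiff ℝ 2 V ∧ (∀ s, Function.Periodic (fun θ ↦ V (s, θ)) (2 * π)) ∧
      (∀ s θ, cylLaplacian V (s, θ) = F s θ) ∧
      ∀ s θ, ‖V (s, θ)‖ ≤ (∑' n : ℤ, 1 / (|(n : ℝ)| - α) ^ 2) * (A * exp (α * |s|)) := by
  set g : ℤ → ℝ → ℂ := fun n s ↦ fourierCoeffOn two_pi_pos (F s) n
  have g_decay (n : ℤ) (hn : n ≠ 0) (s : ℝ) : ‖g n s‖ ≤ K / n ^ 2 := by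
    refine (norm_fourierCoeffOn_le_of_contDiff_two two_pi_pos (hF s) ?_ (hFK s) hn).trans_eq ?_
    · simpa using hper s
    · rw [sub_zero, div_mul_cancel_left₀ two_pi_pos.ne', inv_pow, sq_abs, inv_mul_eq_div]
  have g_summable (s : ℝ) : Summable fun n ↦ g n s := by
    refine Summable.of_norm_bounded_eventually
      ((Real.summable_one_div_int_pow.mpr one_lt_two).mul_left K) ?_
    filter_upwards [eventually_cofinite_ne 0] with n hn
    simpa [div_eq_mul_inv] using g_decay n hn s
  exact exists_cylLaplacian_eq_of_hasSum_fourier hα hαn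
    (fun n ↦ continuous_fourierCoeffOn two_pi_pos hFc n)
    (fun n s ↦ norm_fourierCoeffOn_le two_pi_pos (fun θ _ ↦ hFA s θ) n) g_decay fun s ↦
      hasSum_fourierCoeffOn_mul_fourier two_pi_pos (hF s).continuous (hper s) (g_summable s)

end InfiniteCylinder

section FiniteCylinder

lemma exists_continuous_retraction_Icc {a b : ℝ} (h0 : 0 ∈ Icc a b) :
    ∃ σ : ℝ → ℝ, Continuous σ ∧ (∀ s, σ s ∈ Icc a b) ∧ (∀ s, |σ s| ≤ |s|) ∧
      ∀ s ∈ Icc a b, σ s = s := by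
  have hab : a ≤ b := h0.1.trans h0.2
  refine ⟨fun s ↦ projIcc a b hab s, continuous_subtype_val.comp continuous_projIcc,
    fun s ↦ (projIcc a b hab s).2, fun s ↦ ?_, fun s hs ↦ by simp only [projIcc_of_mem hab hs]⟩
  simpa [projIcc_of_mem hab h0] using abs_projIcc_sub_projIcc hab (c := s) (d := 0)

lemma exists_bound_iteratedDeriv_snd {E : Type*} [NormedAddCommGroup E] [NormedSpace ℝ E]
    {V : ℝ × ℝ → E} {k : ℕ} (hV : ContDiff ℝ k V) {S T : Set ℝ} (hS : IsCompact S)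
    (hT : IsCompact T) :
    ∃ K, ∀ s ∈ S, ∀ θ ∈ T, ‖iteratedDeriv k (fun y ↦ V (s, y)) θ‖ ≤ K := by
  have deriv_continuous : Continuous fun p ↦ iteratedFDeriv ℝ k V p fun _ ↦ ((0 : ℝ), (1 : ℝ)) :=
    (ContinuousMultilinearMap.apply ℝ (fun _ : Fin k ↦ ℝ × ℝ) E fun _ ↦ (0, 1)).continuous.comp
      (hV.continuous_iteratedFDeriv le_rfl)
  obtain ⟨K, hK⟩ := (hS.prod hT).exists_bound_of_continuousOn deriv_continuous.continuousOn
  refine ⟨K, fun s hs θ hθ ↦ ?_⟩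
  rw [iteratedDeriv_snd_eq_iteratedFDeriv hV]
  exact hK (s, θ) ⟨hs, hθ⟩

lemma exists_cylLaplacian_eq_on_Icc {α A L : ℝ} (hα : 0 ≤ α) (hαn : ∀ n : ℤ, α ≠ n) (hL : 0 ≤ L)
    {f : ℝ × ℝ → ℂ} (hf : ContDiff ℝ 2 f)
    (hper : ∀ s, Function.Periodic (fun θ ↦ f (s, θ)) (2 * π))
    (hfA : ∀ s ∈ Icc (-L) L, ∀ θ, ‖f (s, θ)‖ ≤ A * exp (α * |s|)) :
    ∃ V : ℝ × ℝ → ℂ, ContDiff ℝ 2 V ∧ (∀ s, Function.Periodic (fun θ ↦ V (s, θ)) (2 * π)) ∧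
      (∀ s ∈ Icc (-L) L, ∀ θ, cylLaplacian V (s, θ) = f (s, θ)) ∧
      ∀ s θ, ‖V (s, θ)‖ ≤ (∑' n : ℤ, 1 / (|(n : ℝ)| - α) ^ 2) * (A * exp (α * |s|)) := by
  have h0 : (0 : ℝ) ∈ Icc (-L) L := ⟨neg_nonpos.mpr hL, hL⟩
  have hA : 0 ≤ A := by simpa using (norm_nonneg _).trans (hfA 0 h0 0)
  obtain ⟨σ, σ_continuous, σ_mem, σ_abs_le, σ_eq⟩ := exists_continuous_retraction_Icc h0
  obtain ⟨K, hK⟩ := exists_bound_iteratedDeriv_snd (k := 2) hf (isCompact_Icc (a := -L) (b := L))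
    (isCompact_Icc (a := 0) (b := 2 * π))
  have clamped_le (s θ : ℝ) : ‖f (σ s, θ)‖ ≤ A * exp (α * |s|) := by
    refine (hfA _ (σ_mem s) θ).trans ?_
    have := σ_abs_le s
    gcongr
  obtain ⟨V, V_contDiff, V_periodic, V_eq, V_le⟩ :=
    exists_cylLaplacian_eq (F := fun s θ ↦ f (σ s, θ)) hα hαn
      (hf.continuous.comp ((σ_continuous.comp continuous_fst).prodMk continuous_snd))
      (fun s ↦ hf.comp (contDiff_const.prodMk contDiff_id)) (fun s ↦ hper (σ s))
      clamped_le fun s ↦ hK _ (σ_mem s)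
  refine ⟨V, V_contDiff, V_periodic, fun s hs θ ↦ ?_, V_le⟩
  rw [V_eq, σ_eq s hs]

lemma exp_mul_abs_le_exp_add_exp_neg_rpow {α : ℝ} (hα : 0 ≤ α) (s : ℝ) :
    exp (α * |s|) ≤ (exp s + exp (-s)) ^ α := by
  rw [mul_comm, exp_mul]
  gcongr
  exact exp_abs_le s

lemma exp_add_exp_neg_rpow_le {α : ℝ} (hα : 0 ≤ α) (s : ℝ) :
    (exp s + exp (-s)) ^ α ≤ 2 ^ α * exp (α * |s|) := by
  rw [mul_comm α, exp_mul, ← mul_rpow zero_le_two (exp_nonneg _), two_mul]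
  gcongr
  exacts [le_abs_self s, neg_le_abs s]

theorem key_lemma_finite_cylinder_general {α : ℝ} (hα : 0 < α) (hαn : ∀ n : ℤ, α ≠ n) :
    ∃ C : ℝ, 0 < C ∧ ∀ L : ℝ, 0 ≤ L → ∀ f : ℝ × ℝ → ℝ, ContDiff ℝ 2 f →
      (∀ s θ, f (s, θ + 2 * π) = f (s, θ)) → ∀ C₁ : ℝ,
      (∀ s θ, s ∈ Icc (-L) L → |f (s, θ)| ≤ C₁ * (exp s + exp (-s)) ^ α) →
      ∃ v : ℝ × ℝ → ℝ, ContDiff ℝ 2 v ∧ (∀ s θ, v (s, θ + 2 * π) = v (s, θ)) ∧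
        (∀ s θ, s ∈ Icc (-L) L → cylLaplacian v (s, θ) = f (s, θ)) ∧
        ∀ s θ, |v (s, θ)| ≤ C * C₁ * (exp s + exp (-s)) ^ α := by
  have weight_pos : 0 < ∑' n : ℤ, 1 / (|(n : ℝ)| - α) ^ 2 :=
    (summable_one_div_abs_intCast_sub_sq α).tsum_pos (fun _ ↦ by positivity) 0
      (by simpa using pow_pos hα 2)
  refine ⟨(∑' n : ℤ, 1 / (|(n : ℝ)| - α) ^ 2) * 2 ^ α, by positivity,
    fun L hL f hf hper C₁ hfC ↦ ?_⟩
  have hC₁ : 0 ≤ C₁ := nonneg_of_mul_nonneg_left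
    ((abs_nonneg _).trans (hfC 0 0 ⟨neg_nonpos.mpr hL, hL⟩)) (by positivity)
  obtain ⟨V, V_contDiff, V_periodic, V_eq, V_le⟩ :=
    exists_cylLaplacian_eq_on_Icc (f := fun p ↦ (f p : ℂ)) (A := C₁ * 2 ^ α) hα.le hαn hL
      (Complex.ofRealCLM.contDiff.comp hf) (fun s θ ↦ congrArg _ (hper s θ)) fun s hs θ ↦ by
        rw [Complex.norm_real, mul_assoc]
        exact (hfC s θ hs).trans (by gcongr; exact exp_add_exp_neg_rpow_le hα.le s)
  refine ⟨fun p ↦ (V p).re, Complex.reCLM.contDiff.comp V_contDiff,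
    fun s θ ↦ congrArg Complex.re (V_periodic s θ), fun s θ hs ↦ ?_, fun s θ ↦ ?_⟩
  · exact (cylLaplacian_clm_comp Complex.reCLM V_contDiff (s, θ)).trans
      (congrArg Complex.re (V_eq s hs θ))
  · calc |(V (s, θ)).re| ≤ ‖V (s, θ)‖ := Complex.abs_re_le_norm _
      _ ≤ (∑' n : ℤ, 1 / (|(n : ℝ)| - α) ^ 2) * (C₁ * 2 ^ α * exp (α * |s|)) := V_le s θ
      _ ≤ (∑' n : ℤ, 1 / (|(n : ℝ)| - α) ^ 2) * (C₁ * 2 ^ α * (exp s + exp (-s)) ^ α) := by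
          gcongr
          exact exp_mul_abs_le_exp_add_exp_neg_rpow hα.le s
      _ = _ := by ring

end FiniteCylinder

/-- Key lemma on the finite cylinder: for `0 < α` not an integer and `C₁ > 0`, there is
`C₂ > 0` independent of `L ≥ 1` such that any smooth `2π`-periodic-in-`θ` right-hand side
`f` with `|f| ≤ C₁ (e^s+e^{-s})^α` on `[-L,L] × ℝ` admits a solution `v` of
`∂²v/∂s² + ∂²v/∂θ² = f` with `|v| ≤ C₂ (e^s+e^{-s})^α` there. -/
theorem key_lemma_finite_cylinder :
    ∀ α : ℝ, 0 < α → (∀ n : ℤ, α ≠ (n : ℝ)) → ∀ C₁ : ℝ, 0 < C₁ →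
    ∃ C₂ : ℝ, 0 < C₂ ∧
      ∀ L : ℝ, 1 ≤ L → ∀ f : ℝ × ℝ → ℝ,
        ContDiff ℝ (⊤ : ℕ∞) f →
        (∀ s θ : ℝ, f (s, θ + 2 * Real.pi) = f (s, θ)) →
        (∀ s θ : ℝ, s ∈ Set.Icc (-L) L →
          |f (s, θ)| ≤ C₁ * (Real.exp s + Real.exp (-s)) ^ α) →
        ∃ v : ℝ × ℝ → ℝ,
          ContDiff ℝ 2 v ∧
          (∀ s θ : ℝ, v (s, θ + 2 * Real.pi) = v (s, θ)) ∧
          (∀ s θ : ℝ, s ∈ Set.Icc (-L) L →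
            deriv (fun s' => deriv (fun s'' => v (s'', θ)) s') s +
              deriv (fun θ' => deriv (fun θ'' => v (s, θ'')) θ') θ = f (s, θ)) ∧
          (∀ s θ : ℝ, s ∈ Set.Icc (-L) L →
            |v (s, θ)| ≤ C₂ * (Real.exp s + Real.exp (-s)) ^ α) := by
  intro α hα hαn C₁ hC₁
  obtain ⟨C, hC, solve⟩ := key_lemma_finite_cylinder_general hα hαn
  refine ⟨C * C₁, by positivity, fun L hL f hf hper hf_le ↦ ?_⟩
  obtain ⟨v, v_contDiff, v_periodic, v_eq, v_le⟩ :=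
    solve L (by linarith) f (hf.of_le (WithTop.coe_le_coe.mpr le_top)) hper C₁ hf_le
  simp only [cylLaplacian, iteratedDeriv_succ, iteratedDeriv_zero] at v_eq
  exact ⟨v, v_contDiff, v_periodic, v_eq, fun s θ _ ↦ v_le s θ⟩
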